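/- Let (Ω, F, ℙ) be a probability space, let K ⊂ ℝ^d be compact, let 0 < γ ≤ 1 and let k ≥ 1 be an integer. Let Y : Ω × K → ℝ be jointly measurable, with each sample path Y(ω,·) continuous and γ-Hölder, and set M(ω) := max( sup_{y∈K} |Y(ω,y)| , sup_{y≠y'∈K} |Y(ω,y)−Y(ω,y')|/‖y−y'‖^γ ) (the C^{0,γ}(K) norm of the sample path); assume E[M^k] < ∞. Define the k-point correlation C_k(y_1,…,y_k) := E[ ∏_{i=1}^k Y(·,y_i) ]. Then for every nonempty subset T ⊆ {1,…,k}, every y ∈ K^k and every increment vector h = (h_1,…,h_k) ∈ (ℝ^d)^k with h_i ≠ 0 for i ∈ T, h_i = 0 for i ∉ T, and y + h ∈ K^k, the mixed difference satisfies | Δ_T^h C_k(y) | ≤ E[M^k] · ∏_{i∈T} ‖h_i‖^γ. Consequently C_k belongs to the mixed Hölder space C^{0,γ,mix}(K^k) with ‖C_k‖_{γ,mix} ≤ E[M^k] = ‖Y‖^k_{L^k(Ω; C^{0,γ}(K))}. -/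

import Mathlib

open MeasureTheory Finset

/-!
For a fixed sample point the correlation integrand is a tensor product, so its mixed difference
factorizes into one-dimensional increments over `T` and plain values off `T`. Each of the factors
carries one power of `M`, which gives the bound pointwise; the alternating sum has finitely many
integrable terms, so the bound survives taking expectations. The sup bound is the case `T = ∅`.
-/

lemma norm_finsetProd_le_finsetProd {ι R : Type*} [NormedCommRing R] [NormOneClass R]
    {s : Finset ι} {f : ι → R} {g : ι → ℝ} (hfg : ∀ i ∈ s, ‖f i‖ ≤ g i) :
    ‖∏ i ∈ s, f i‖ ≤ ∏ i ∈ s, g i :=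
  (Finset.norm_prod_le s f).trans (prod_le_prod (fun _ _ ↦ norm_nonneg _) hfg)

lemma integrable_finsetProd_of_norm_le {ι Ω R : Type*} [MeasurableSpace Ω] {μ : Measure Ω}
    [NormedCommRing R] [NormOneClass R] {s : Finset ι} {X : ι → Ω → R} {M : Ω → ℝ}
    (hX : ∀ i ∈ s, AEStronglyMeasurable (X i) μ) (hXM : ∀ᵐ ω ∂μ, ∀ i ∈ s, ‖X i ω‖ ≤ M ω)
    (hM : Integrable (fun ω ↦ M ω ^ #s) μ) :
    Integrable (fun ω ↦ ∏ i ∈ s, X i ω) μ := by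
  refine hM.mono' (s.aestronglyMeasurable_fun_prod hX) ?_
  filter_upwards [hXM] with ω hω
  exact (norm_finsetProd_le_finsetProd hω).trans_eq (prod_const _)

section MixedDiff

variable {ι : Type*} [DecidableEq ι] {α : ι → Type*}

/-- The mixed difference `Δ_T φ` over the box with corners `y` and `z`: the alternating sum of `φ`
over the vertices obtained from `y` by moving the coordinates in some `S ⊆ T` to those of `z`.
Taking the far corner `z` in place of the increment `h = z - y` requires no addition on `α i`. -/
def mixedDiff {F : Type*} [AddCommGroup F] (T : Finset ι) (φ : (∀ i, α i) → F) (y z : ∀ i, α i) :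
    F :=
  ∑ S ∈ T.powerset, (-1 : ℤ) ^ (#T - #S) • φ (S.piecewise z y)

lemma mixedDiff_empty {F : Type*} [AddCommGroup F] (φ : (∀ i, α i) → F) (y z : ∀ i, α i) :
    mixedDiff ∅ φ y z = φ y := by
  simp [mixedDiff]

lemma mixedDiff_add_right {F : Type*} [AddCommGroup F] [∀ i, AddZeroClass (α i)] (T : Finset ι)
    (φ : (∀ i, α i) → F) (y h : ∀ i, α i) :
    mixedDiff T φ y (y + h) =
      ∑ S ∈ T.powerset, (-1 : ℤ) ^ (#T - #S) • φ (fun i ↦ y i + if i ∈ S then h i else 0) := by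
  have vertex_eq (S : Finset ι) :
      S.piecewise (y + h) y = fun i ↦ y i + if i ∈ S then h i else 0 := by
    ext i
    by_cases hi : i ∈ S <;> simp [hi]
  simp only [mixedDiff, vertex_eq]

lemma mixedDiff_prod [Fintype ι] {R : Type*} [CommRing R] (T : Finset ι) (f : ∀ i, α i → R)
    (y z : ∀ i, α i) :
    mixedDiff T (fun x ↦ ∏ i, f i (x i)) y z =
      (∏ i ∈ T, (f i (z i) - f i (y i))) * ∏ i ∈ Tᶜ, f i (y i) := by
  have vertex_value {S : Finset ι} (hS : S ⊆ T) :
      ∏ i, f i (S.piecewise z y i) =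
        ((∏ i ∈ S, f i (z i)) * ∏ i ∈ T \ S, f i (y i)) * ∏ i ∈ Tᶜ, f i (y i) := by
    rw [← prod_mul_prod_compl T, ← prod_sdiff hS, mul_comm (∏ i ∈ T \ S, f i (S.piecewise z y i))]
    congr! 3 with i hi i hi i hi
    · rw [piecewise_eq_of_mem _ _ _ hi]
    · rw [piecewise_eq_of_notMem _ _ _ (mem_sdiff.mp hi).2]
    · rw [piecewise_eq_of_notMem _ _ _ fun hiS ↦ mem_compl.mp hi (hS hiS)]
  simp only [mixedDiff, sub_eq_add_neg, prod_add, sum_mul]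
  refine sum_congr rfl fun S hS ↦ ?_
  rw [mem_powerset] at hS
  rw [vertex_value hS, prod_neg, card_sdiff_of_subset hS, zsmul_eq_mul]
  push_cast
  ring

lemma norm_mixedDiff_prod_le [Fintype ι] {R : Type*} [NormedCommRing R] [NormOneClass R]
    {T : Finset ι} {f : ∀ i, α i → R} {y z : ∀ i, α i} {C r : ι → ℝ}
    (h_value : ∀ i ∉ T, ‖f i (y i)‖ ≤ C i)
    (h_incr : ∀ i ∈ T, ‖f i (z i) - f i (y i)‖ ≤ C i * r i) :
    ‖mixedDiff T (fun x ↦ ∏ i, f i (x i)) y z‖ ≤ (∏ i, C i) * ∏ i ∈ T, r i := by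
  have h_on : ‖∏ i ∈ T, (f i (z i) - f i (y i))‖ ≤ ∏ i ∈ T, (C i * r i) :=
    norm_finsetProd_le_finsetProd h_incr
  have h_off : ‖∏ i ∈ Tᶜ, f i (y i)‖ ≤ ∏ i ∈ Tᶜ, C i :=
    norm_finsetProd_le_finsetProd fun i hi ↦ h_value i (mem_compl.mp hi)
  calc ‖mixedDiff T (fun x ↦ ∏ i, f i (x i)) y z‖
      ≤ ‖∏ i ∈ T, (f i (z i) - f i (y i))‖ * ‖∏ i ∈ Tᶜ, f i (y i)‖ := by
        rw [mixedDiff_prod]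
        exact norm_mul_le _ _
    _ ≤ (∏ i ∈ T, (C i * r i)) * ∏ i ∈ Tᶜ, C i :=
        mul_le_mul h_on h_off (norm_nonneg _) ((norm_nonneg _).trans h_on)
    _ = (∏ i, C i) * ∏ i ∈ T, r i := by
        rw [prod_mul_distrib, mul_right_comm, prod_mul_prod_compl]

lemma mixedDiff_integral {Ω F : Type*} [MeasurableSpace Ω] {μ : Measure Ω} [NormedAddCommGroup F]
    [NormedSpace ℝ F] {T : Finset ι} {φ : Ω → (∀ i, α i) → F} {y z : ∀ i, α i}
    (hφ : ∀ S ⊆ T, Integrable (fun ω ↦ φ ω (S.piecewise z y)) μ) :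
    mixedDiff T (fun x ↦ ∫ ω, φ ω x ∂μ) y z = ∫ ω, mixedDiff T (φ ω) y z ∂μ := by
  simp only [mixedDiff, ← Int.cast_smul_eq_zsmul ℝ]
  rw [integral_finsetSum _ fun S hS ↦ (hφ S (mem_powerset.mp hS)).fun_smul _]
  simp only [integral_smul]

end MixedDiff

section Correlation

variable {ι Ω α 𝕜 : Type*} [Fintype ι] [MeasurableSpace Ω] [RCLike 𝕜]

/-- The correlation function `C(y) = E[∏ i, Y(·, y i)]` of a random field `Y`, with one point `y i`
for each index `i : ι`; the `k`-point correlation is the case `ι = Fin k`. -/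
noncomputable def multipointCorrelation (μ : Measure Ω) (Y : Ω → α → 𝕜) (y : ι → α) : 𝕜 :=
  ∫ ω, ∏ i, Y ω (y i) ∂μ

/-- For `γ`-Hölder fields the modulus is `ρ x x' = ‖x - x'‖ ^ γ`. -/
theorem stmt_10_general [DecidableEq ι] {μ : Measure Ω} {K : Set α} {Y : Ω → α → 𝕜} {M : Ω → ℝ}
    {ρ : α → α → ℝ}
    (hY : ∀ x ∈ K, AEStronglyMeasurable (Y · x) μ)
    (h_sup : ∀ᵐ ω ∂μ, ∀ x ∈ K, ‖Y ω x‖ ≤ M ω)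
    (h_incr : ∀ᵐ ω ∂μ, ∀ x ∈ K, ∀ x' ∈ K, ‖Y ω x - Y ω x'‖ ≤ M ω * ρ x x')
    (hM : Integrable (fun ω ↦ M ω ^ Fintype.card ι) μ)
    (T : Finset ι) {y z : ι → α} (hy : ∀ i, y i ∈ K) (hz : ∀ i ∈ T, z i ∈ K) :
    ‖mixedDiff T (multipointCorrelation μ Y) y z‖ ≤
      (∫ ω, M ω ^ Fintype.card ι ∂μ) * ∏ i ∈ T, ρ (z i) (y i) := by
  have vertex_mem {S : Finset ι} (hS : S ⊆ T) (i : ι) : S.piecewise z y i ∈ K := by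
    by_cases hi : i ∈ S
    · simpa [hi] using hz i (hS hi)
    · simpa [hi] using hy i
  have h_vertex (S : Finset ι) (hS : S ⊆ T) :
      Integrable (fun ω ↦ ∏ i, Y ω (S.piecewise z y i)) μ :=
    integrable_finsetProd_of_norm_le (fun i _ ↦ hY _ (vertex_mem hS i))
      (h_sup.mono fun _ h i _ ↦ h _ (vertex_mem hS i)) hM
  unfold multipointCorrelation
  rw [mixedDiff_integral h_vertex, ← integral_mul_const]
  refine norm_integral_le_of_norm_le (hM.mul_const _) ?_
  filter_upwards [h_sup, h_incr] with ω h_sup_ω h_incr_ω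
  simpa using norm_mixedDiff_prod_le (C := fun _ ↦ M ω) (fun i _ ↦ h_sup_ω _ (hy i))
    fun i hi ↦ h_incr_ω _ (hz i hi) _ (hy i)

end Correlation

/-- for a jointly measurable random field `Y` on a probability space,
with continuous `γ`-Hölder sample paths on a compact `K` whose `C^{0,γ}(K)` norm is
bounded by `M(ω)` with `E[M^k] < ∞`, the `k`-point correlation
`C_k(y) = E[∏ Y(·,y_i)]` satisfies the mixed difference bound
`|Δ_T^h C_k(y)| ≤ E[M^k] ∏_{i∈T} ‖h_i‖^γ` and the sup bound `|C_k(y)| ≤ E[M^k]`;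
i.e. `C_k ∈ C^{0,γ,mix}(K^k)` with `‖C_k‖_{γ,mix} ≤ E[M^k]`. -/
theorem stmt_10 {d : ℕ} {Ω : Type*} [MeasurableSpace Ω] (μ : Measure Ω)
    [IsProbabilityMeasure μ]
    (K : Set (EuclideanSpace ℝ (Fin d))) (hK : IsCompact K)
    (γ : ℝ) (hγ0 : 0 < γ) (hγ1 : γ ≤ 1)
    (k : ℕ) (hk : 1 ≤ k)
    (Y : Ω → EuclideanSpace ℝ (Fin d) → ℝ)
    (hmeas : Measurable fun q : Ω × EuclideanSpace ℝ (Fin d) => Y q.1 q.2)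
    (hcont : ∀ ω, ContinuousOn (Y ω) K)
    (M : Ω → ℝ)
    (hMsup : ∀ ω, ∀ y ∈ K, |Y ω y| ≤ M ω)
    (hMhold : ∀ ω, ∀ y ∈ K, ∀ y' ∈ K, |Y ω y - Y ω y'| ≤ M ω * ‖y - y'‖ ^ γ)
    (hMint : Integrable (fun ω => M ω ^ k) μ) :
    (∀ T : Finset (Fin k), T.Nonempty →
      ∀ y h : Fin k → EuclideanSpace ℝ (Fin d),
      (∀ i, y i ∈ K) → (∀ i ∈ T, h i ≠ 0) → (∀ i ∉ T, h i = 0) →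
      (∀ i, y i + h i ∈ K) →
      |∑ S ∈ T.powerset, (-1 : ℝ) ^ (T.card - S.card) *
          (∫ ω, ∏ i, Y ω (y i + if i ∈ S then h i else 0) ∂μ)|
        ≤ (∫ ω, M ω ^ k ∂μ) * ∏ i ∈ T, ‖h i‖ ^ γ) ∧
    (∀ y : Fin k → EuclideanSpace ℝ (Fin d), (∀ i, y i ∈ K) →
      |∫ ω, ∏ i, Y ω (y i) ∂μ| ≤ ∫ ω, M ω ^ k ∂μ) := by
  have mixed_bound (T : Finset (Fin k)) {y z : Fin k → EuclideanSpace ℝ (Fin d)}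
      (hy : ∀ i, y i ∈ K) (hz : ∀ i ∈ T, z i ∈ K) :
      |mixedDiff T (multipointCorrelation μ Y) y z| ≤
        (∫ ω, M ω ^ k ∂μ) * ∏ i ∈ T, ‖z i - y i‖ ^ γ := by
    simpa using stmt_10_general (ρ := fun x x' ↦ ‖x - x'‖ ^ γ)
      (fun x _ ↦ hmeas.of_uncurry_right.aestronglyMeasurable) (.of_forall hMsup) (.of_forall hMhold)
      (by simpa using hMint) T hy hz
  refine ⟨fun T _ y h hy _ _ hyh ↦ ?_, fun y hy ↦ ?_⟩
  · simpa [mixedDiff_add_right, multipointCorrelation] using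
      mixed_bound T (z := y + h) hy fun i _ ↦ hyh i
  · simpa [mixedDiff_empty, multipointCorrelation] using mixed_bound ∅ hy (z := y) (by simp)
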